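/- In the flat para-Hermitian model V = ℝⁿ × ℝⁿ with an everywhere differentiable B-field B : V → L(ℝⁿ, ℝⁿ) (each B_q skew for the dot product), the following are equivalent: (i) the deformed distribution T₊ᴮ is involutive under the flat D-bracket, i.e. for all vector fields X, Y differentiable at p and all p ∈ V, ⟦P₊ᴮX, P₊ᴮY⟧ᴰ(p) ∈ T₊ᴮ(p); (ii) for every p ∈ V and all x, y, z ∈ ℝⁿ, the cyclic sum (∂_{(x, B_p x)} b)(y, z) + (∂_{(y, B_p y)} b)(z, x) + (∂_{(z, B_p z)} b)(x, y) = 0, where (∂_h b)(u, w) is the Fréchet derivative at p in direction h of q ↦ B_q u · w. (This is the Maurer–Cartan type condition d₊b + (Λ³η)[b, b]₋ = 0 for compatibility of K_B with K.) -/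

import Mathlib

/-- Dot product on `ℝⁿ`. -/
def flatDot (n : ℕ) (u v : Fin n → ℝ) : ℝ := ∑ i, u i * v i

/-- The split-signature metric `η((x, x̃), (y, ỹ)) = x̃·y + x·ỹ` of the flat
para-Hermitian model `V = ℝⁿ × ℝⁿ`. -/
def flatEta (n : ℕ) (w w' : (Fin n → ℝ) × (Fin n → ℝ)) : ℝ :=
  flatDot n w.2 w'.1 + flatDot n w.1 w'.2

lemma flatDot_eq_dotProduct (n : ℕ) (u v : Fin n → ℝ) : flatDot n u v = dotProduct u v := rfl

/-- The metric `flatEta` represents every linear functional. -/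
lemma exists_flatEta_eq (n : ℕ) (L : (Fin n → ℝ) × (Fin n → ℝ) →ₗ[ℝ] ℝ) :
    ∃ ξ, ∀ w, flatEta n ξ w = L w := by
  refine ⟨(fun i => L (0, fun j => if i = j then 1 else 0),
    fun i => L (fun j => if i = j then 1 else 0, 0)), fun w => ?_⟩
  have h₁ := (L ∘ₗ LinearMap.inl ℝ _ _).pi_apply_eq_sum_univ w.1
  have h₂ := (L ∘ₗ LinearMap.inr ℝ _ _).pi_apply_eq_sum_univ w.2
  have hw : L w = L (w.1, 0) + L (0, w.2) := by rw [← map_add]; simp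
  simp only [LinearMap.comp_apply, LinearMap.inl_apply, LinearMap.inr_apply, smul_eq_mul] at h₁ h₂
  rw [hw, h₁, h₂]
  simp only [flatEta, flatDot, mul_comm]

/-- The graph of a skew endomorphism is a maximal isotropic subspace for `flatEta`. -/
lemma snd_eq_iff_flatEta_graph (n : ℕ) (A : (Fin n → ℝ) →L[ℝ] (Fin n → ℝ))
    (hA : ∀ u v, flatDot n (A u) v = - flatDot n u (A v)) (ξ : (Fin n → ℝ) × (Fin n → ℝ)) :
    ξ.2 = A ξ.1 ↔ ∀ z, flatEta n ξ (z, A z) = 0 := by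
  have key (z) : flatEta n ξ (z, A z) = flatDot n (ξ.2 - A ξ.1) z := by
    have h := hA ξ.1 z
    simp only [flatEta, flatDot_eq_dotProduct, sub_dotProduct] at h ⊢
    linarith
  simp only [key, flatDot_eq_dotProduct, dotProduct_eq_zero_iff, sub_eq_zero]

lemma flatEta_graph_eq (n : ℕ) (A : (Fin n → ℝ) →L[ℝ] (Fin n → ℝ))
    (hA : ∀ u v, flatDot n (A u) v = - flatDot n u (A v)) (a c z : Fin n → ℝ) :
    flatEta n (a, c + A a) (z, A z) = flatDot n c z := by
  have h := hA a z
  simp only [flatEta, flatDot_eq_dotProduct, add_dotProduct] at h ⊢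
  linarith

lemma fderiv_flatDot_apply (n : ℕ) {E : Type*} [NormedAddCommGroup E] [NormedSpace ℝ E]
    {B : E → ((Fin n → ℝ) →L[ℝ] (Fin n → ℝ))} {p : E} (hB : DifferentiableAt ℝ B p)
    (y z : Fin n → ℝ) (h : E) :
    fderiv ℝ (fun q => flatDot n (B q y) z) p h = flatDot n (fderiv ℝ B p h y) z := by
  let L : (Fin n → ℝ) →L[ℝ] ℝ := ∑ i, z i • ContinuousLinearMap.proj i
  have hL (u) : L u = flatDot n u z := by
    simp [L, flatDot, mul_comm]
  have hd := L.hasFDerivAt.comp p (hB.hasFDerivAt.clm_apply (hasFDerivAt_const y p))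
  have hf : (fun q => flatDot n (B q y) z) = L ∘ fun q => B q y := by
    funext q; simp [hL]
  rw [hf, hd.fderiv]
  simp [hL]

lemma fderiv_graph_apply (n : ℕ) {E : Type*} [NormedAddCommGroup E] [NormedSpace ℝ E]
    {B : E → ((Fin n → ℝ) →L[ℝ] (Fin n → ℝ))} {p : E} (hB : DifferentiableAt ℝ B p)
    {u : E → (Fin n → ℝ)} (hu : DifferentiableAt ℝ u p) (h : E) :
    fderiv ℝ (fun q => (u q, B q (u q))) p h
      = (fderiv ℝ u p h, fderiv ℝ B p h (u p) + B p (fderiv ℝ u p h)) := by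
  rw [(hu.hasFDerivAt.prodMk (hB.hasFDerivAt.clm_apply hu.hasFDerivAt)).fderiv]
  simp [add_comm]

lemma flatDot_fderiv_skew (n : ℕ) {E : Type*} [NormedAddCommGroup E] [NormedSpace ℝ E]
    {B : E → ((Fin n → ℝ) →L[ℝ] (Fin n → ℝ))}
    (hBskew : ∀ q u v, flatDot n (B q u) v = - flatDot n u (B q v))
    {p : E} (hB : DifferentiableAt ℝ B p) (u v : Fin n → ℝ) (h : E) :
    flatDot n (fderiv ℝ B p h u) v = - flatDot n (fderiv ℝ B p h v) u := by
  rw [← fderiv_flatDot_apply n hB, ← fderiv_flatDot_apply n hB]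
  have hf : (fun q => flatDot n (B q u) v) = fun q => - flatDot n (B q v) u := by
    funext q
    rw [hBskew, flatDot_eq_dotProduct, dotProduct_comm, ← flatDot_eq_dotProduct]
  rw [hf, fderiv_fun_neg]
  rfl

/-- On the graph of `B`, the functional defining the D-bracket of two graph-valued fields is the
cyclic sum of derivatives of the two-form of `B`. -/
lemma flatBracket_graph_eq_cyclic_sum (n : ℕ)
    {B : (Fin n → ℝ) × (Fin n → ℝ) → ((Fin n → ℝ) →L[ℝ] (Fin n → ℝ))}
    (hBskew : ∀ q u v, flatDot n (B q u) v = - flatDot n u (B q v))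
    {p : (Fin n → ℝ) × (Fin n → ℝ)} (hB : DifferentiableAt ℝ B p)
    {u v : (Fin n → ℝ) × (Fin n → ℝ) → (Fin n → ℝ)}
    (hu : DifferentiableAt ℝ u p) (hv : DifferentiableAt ℝ v p) (z : Fin n → ℝ) :
    flatEta n (fderiv ℝ (fun q => (v q, B q (v q))) p (u p, B p (u p))
        - fderiv ℝ (fun q => (u q, B q (u q))) p (v p, B p (v p))) (z, B p z)
      + flatEta n (fderiv ℝ (fun q => (u q, B q (u q))) p (z, B p z)) (v p, B p (v p))
    = fderiv ℝ (fun q => flatDot n (B q (v p)) z) p (u p, B p (u p))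
      + fderiv ℝ (fun q => flatDot n (B q z) (u p)) p (v p, B p (v p))
      + fderiv ℝ (fun q => flatDot n (B q (u p)) (v p)) p (z, B p z) := by
  simp only [fderiv_flatDot_apply n hB, fderiv_graph_apply n hB hu, fderiv_graph_apply n hB hv]
  rw [flatEta_graph_eq n _ (hBskew p), Prod.mk_sub_mk, add_sub_add_comm, ← map_sub,
    flatEta_graph_eq n _ (hBskew p), flatDot_fderiv_skew n hBskew hB z (u p)]
  simp only [flatDot_eq_dotProduct, sub_dotProduct]
  ring

/-- Maurer–Cartan condition in the flat para-Hermitian model: the deformed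
distribution `T₊ᴮ(p) = {(u, B_p u)}` is involutive under the flat D-bracket if and
only if the cyclic sum `(∂_{(x,B_px)}b)(y,z) + (∂_{(y,B_py)}b)(z,x) + (∂_{(z,B_pz)}b)(x,y)`
vanishes everywhere (`d₊b + (Λ³η)[b, b]₋ = 0`). -/
theorem stmt16 (n : ℕ)
    (B : (Fin n → ℝ) × (Fin n → ℝ) → ((Fin n → ℝ) →L[ℝ] (Fin n → ℝ)))
    (hBskew : ∀ q u v, flatDot n (B q u) v = - flatDot n u (B q v))
    (hB : Differentiable ℝ B) :
    (∀ (X Y : (Fin n → ℝ) × (Fin n → ℝ) → (Fin n → ℝ) × (Fin n → ℝ))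
        (p : (Fin n → ℝ) × (Fin n → ℝ)),
      DifferentiableAt ℝ X p → DifferentiableAt ℝ Y p →
      ∃ ξ : (Fin n → ℝ) × (Fin n → ℝ),
        (∀ w, flatEta n ξ w
          = flatEta n (fderiv ℝ (fun q => ((Y q).1, B q ((Y q).1))) p ((X p).1, B p ((X p).1))
              - fderiv ℝ (fun q => ((X q).1, B q ((X q).1))) p ((Y p).1, B p ((Y p).1))) w
            + flatEta n (fderiv ℝ (fun q => ((X q).1, B q ((X q).1))) p w)
                ((Y p).1, B p ((Y p).1))) ∧
        ξ.2 = B p ξ.1)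
    ↔ (∀ (p : (Fin n → ℝ) × (Fin n → ℝ)) (x y z : Fin n → ℝ),
        fderiv ℝ (fun q => flatDot n (B q y) z) p (x, B p x)
          + fderiv ℝ (fun q => flatDot n (B q z) x) p (y, B p y)
          + fderiv ℝ (fun q => flatDot n (B q x) y) p (z, B p z) = 0) := by
  constructor
  · intro H p x y z
    obtain ⟨ξ, hξ, hmem⟩ := H (fun _ => (x, 0)) (fun _ => (y, 0)) p
      (differentiableAt_const _) (differentiableAt_const _)
    have h := (snd_eq_iff_flatEta_graph n (B p) (hBskew p) ξ).1 hmem z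
    rw [hξ] at h
    rw [← h]
    exact (flatBracket_graph_eq_cyclic_sum n hBskew (hB p) (u := fun _ => x) (v := fun _ => y)
      (differentiableAt_const _) (differentiableAt_const _) z).symm
  · intro H X Y p hX hY
    let eta : LinearMap.BilinForm ℝ ((Fin n → ℝ) × (Fin n → ℝ)) :=
      LinearMap.mk₂ ℝ (flatEta n)
        (fun a b c => by simp [flatEta, flatDot_eq_dotProduct, add_dotProduct]; ring)
        (fun r a b => by simp [flatEta, flatDot_eq_dotProduct, smul_dotProduct]; ring)
        (fun a b c => by simp [flatEta, flatDot_eq_dotProduct, dotProduct_add]; ring)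
        (fun r a b => by simp [flatEta, flatDot_eq_dotProduct, dotProduct_smul]; ring)
    obtain ⟨ξ, hξ⟩ := exists_flatEta_eq n
      (eta (fderiv ℝ (fun q => ((Y q).1, B q ((Y q).1))) p ((X p).1, B p ((X p).1))
          - fderiv ℝ (fun q => ((X q).1, B q ((X q).1))) p ((Y p).1, B p ((Y p).1)))
        + eta.flip ((Y p).1, B p ((Y p).1)) ∘ₗ
          (fderiv ℝ (fun q => ((X q).1, B q ((X q).1))) p : _ →ₗ[ℝ] _))
    refine ⟨ξ, hξ, (snd_eq_iff_flatEta_graph n (B p) (hBskew p) ξ).2 fun z => ?_⟩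
    rw [hξ]
    exact (flatBracket_graph_eq_cyclic_sum n hBskew (hB p) hX.fst hY.fst z).trans (H p _ _ _)
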